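/- Let F(x,y) = r·φ(u,s,v,t) be a general spherically symmetric metric on a domain of ℝⁿ. At a point (x,y), y ≠ 0, where the fundamental tensor (g_{ij}) is invertible, φ > 0 and σ₁ ≠ 0, the squared norm of the mean Cartan torsion is ‖I‖² = (1/(4r²))·(‖𝔖‖²·H² + 2‖ℜ‖²·H·K + ‖𝔗‖²·K²). -/

import Mathlib

/-!
The mean Cartan torsion is a combination of the two covectors `s` and `t`:
`I_k = (H s_k + K t_k)/(2r)` (`mci_eq`), and the formula for `‖I‖²` is the square of this identity
in the metric `g^{ij}`.

To obtain it, write `F_i = φ r_i + φ_s s_i + φ_t t_i` for the gradient of `F` and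
`A_ij = r F_ij = σ₁(δ_ij − r_i r_j) + φ_ss s_i s_j + φ_st(s_i t_j + t_i s_j) + φ_tt t_i t_j` for its
rescaled Hessian, so that `g_ij = F_i F_j + φ A_ij` (`gm_eq`) and the angular metric is
`h = φ A`. Differentiating once more and eliminating `r_i` and `δ_ij − r_i r_j` in favour of
`F_i`, `h_ij`, `s_i`, `t_i` gives (`cart_eq`)
`2r C_ijk = ζ_i h_jk + ζ_j h_ik + ζ_k h_ij + (cubic form in s and t)`, where
`ζ = (φ_s/φ + σ_{1s}/σ₁) s + (φ_t/φ + σ_{1t}/σ₁) t`, and the coefficients of the cubic form are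
exactly those occurring in `H` and `K`.

Euler's identity yields `g^{ij}F_j = y^i/F` (`gInv_Fd`). Since `s` and `t` annihilate `y`, this gives
`g^{ij}h_ij = n − 1` and `g^{ij}ζ_i h_jk = ζ_k`, so the `ζ`-part of the trace is `(n + 1)ζ_k` and the
cubic part contributes the terms with `‖𝔖‖²`, `‖ℜ‖²`, `‖𝔗‖²`.
-/

noncomputable section

open scoped BigOperators

namespace GSSFinsler

/-- `k`-th standard basis vector of `ℝⁿ`. -/
def bvec (n : ℕ) (k : Fin n) : Fin n → ℝ := Pi.single k 1

/-- Standard inner product on `ℝⁿ`. -/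
def ip {n : ℕ} (x y : Fin n → ℝ) : ℝ := ∑ i, x i * y i

/-- Euclidean norm on `ℝⁿ`. -/
def nrm {n : ℕ} (y : Fin n → ℝ) : ℝ := Real.sqrt (ip y y)

/-! Partial derivative operators on a smooth function of four real variables
`φ = φ(u, s, v, t)`. -/

def pdu (f : ℝ → ℝ → ℝ → ℝ → ℝ) (u s v t : ℝ) : ℝ := deriv (fun z => f z s v t) u
def pds (f : ℝ → ℝ → ℝ → ℝ → ℝ) (u s v t : ℝ) : ℝ := deriv (fun z => f u z v t) s
def pdv (f : ℝ → ℝ → ℝ → ℝ → ℝ) (u s v t : ℝ) : ℝ := deriv (fun z => f u s z t) v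
def pdt (f : ℝ → ℝ → ℝ → ℝ → ℝ) (u s v t : ℝ) : ℝ := deriv (fun z => f u s v z) t

/-- `u := |x|²`. -/
def uu {n : ℕ} (x : Fin n → ℝ) : ℝ := ip x x
/-- `s := ⟨x,y⟩/|y|`. -/
def sc {n : ℕ} (x y : Fin n → ℝ) : ℝ := ip x y / nrm y
/-- `v := ⟨a,x⟩`. -/
def vc {n : ℕ} (a x : Fin n → ℝ) : ℝ := ip a x
/-- `t := ⟨a,y⟩/|y|`. -/
def tc {n : ℕ} (a y : Fin n → ℝ) : ℝ := ip a y / nrm y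

/-- Evaluation of a function of `(u,s,v,t)` at the point determined by `(a,x,y)`. -/
def ev {n : ℕ} (f : ℝ → ℝ → ℝ → ℝ → ℝ) (a x y : Fin n → ℝ) : ℝ :=
  f (uu x) (sc x y) (vc a x) (tc a y)

/-- The general spherically symmetric metric `F(x,y) = |y| φ(u,s,v,t)`. -/
def Fm {n : ℕ} (φ : ℝ → ℝ → ℝ → ℝ → ℝ) (a x y : Fin n → ℝ) : ℝ :=
  nrm y * φ (uu x) (sc x y) (vc a x) (tc a y)

/-- Fundamental tensor `g_{ij} := ½ ∂²(F²)/∂y^i∂y^j`. -/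
def gm {n : ℕ} (φ : ℝ → ℝ → ℝ → ℝ → ℝ) (a x y : Fin n → ℝ) (i j : Fin n) : ℝ :=
  (1/2) * fderiv ℝ (fun z => fderiv ℝ (fun w => (Fm φ a x w)^2) z (bvec n j)) y (bvec n i)

/-- Cartan tensor `C_{ijk} := ½ ∂g_{ij}/∂y^k`. -/
def cart {n : ℕ} (φ : ℝ → ℝ → ℝ → ℝ → ℝ) (a x y : Fin n → ℝ) (i j k : Fin n) : ℝ :=
  (1/2) * fderiv ℝ (fun z => gm φ a x z i j) y (bvec n k)

/-- Angular metric `h_{ij} := g_{ij} − F_{y^i}F_{y^j}`. -/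
def ang {n : ℕ} (φ : ℝ → ℝ → ℝ → ℝ → ℝ) (a x y : Fin n → ℝ) (i j : Fin n) : ℝ :=
  gm φ a x y i j -
    fderiv ℝ (fun w => Fm φ a x w) y (bvec n i) *
      fderiv ℝ (fun w => Fm φ a x w) y (bvec n j)

/-- The fundamental tensor as a matrix. -/
def gMat {n : ℕ} (φ : ℝ → ℝ → ℝ → ℝ → ℝ) (a x y : Fin n → ℝ) :
    Matrix (Fin n) (Fin n) ℝ :=
  Matrix.of fun i j => gm φ a x y i j

/-- The inverse fundamental tensor `g^{ij}`. -/
def gInv {n : ℕ} (φ : ℝ → ℝ → ℝ → ℝ → ℝ) (a x y : Fin n → ℝ) :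
    Matrix (Fin n) (Fin n) ℝ :=
  (gMat φ a x y)⁻¹

/-- Mean Cartan torsion `I_k := g^{jl} C_{jlk}`. -/
def mci {n : ℕ} (φ : ℝ → ℝ → ℝ → ℝ → ℝ) (a x y : Fin n → ℝ) (k : Fin n) : ℝ :=
  ∑ j, ∑ l, gInv φ a x y j l * cart φ a x y j l k

/-- Squared norm `‖I‖² := g^{ij} I_i I_j` of the mean Cartan torsion. -/
def normI2 {n : ℕ} (φ : ℝ → ℝ → ℝ → ℝ → ℝ) (a x y : Fin n → ℝ) : ℝ :=
  ∑ i, ∑ j, gInv φ a x y i j * mci φ a x y i * mci φ a x y j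

/-- `s_i := x_i − s·y_i/r`. -/
def sv {n : ℕ} (x y : Fin n → ℝ) (i : Fin n) : ℝ := x i - sc x y * (y i / nrm y)
/-- `t_i := a_i − t·y_i/r`. -/
def tv {n : ℕ} (a y : Fin n → ℝ) (i : Fin n) : ℝ := a i - tc a y * (y i / nrm y)

/-- `‖𝔖‖² := g^{ij}s_is_j`. -/
def nS2 {n : ℕ} (φ : ℝ → ℝ → ℝ → ℝ → ℝ) (a x y : Fin n → ℝ) : ℝ :=
  ∑ i, ∑ j, gInv φ a x y i j * sv x y i * sv x y j
/-- `‖ℜ‖² := g^{ij}s_it_j`. -/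
def nR2 {n : ℕ} (φ : ℝ → ℝ → ℝ → ℝ → ℝ) (a x y : Fin n → ℝ) : ℝ :=
  ∑ i, ∑ j, gInv φ a x y i j * sv x y i * tv a y j
/-- `‖𝔗‖² := g^{ij}t_it_j`. -/
def nT2 {n : ℕ} (φ : ℝ → ℝ → ℝ → ℝ → ℝ) (a x y : Fin n → ℝ) : ℝ :=
  ∑ i, ∑ j, gInv φ a x y i j * tv a y i * tv a y j

/-! The scalars `σ₁, …, σ₁₁` as functions of `(u,s,v,t)`.  Subscripts on `φ`
denote partial derivatives; `φ_{st}` is `pdt (pds φ)` (first `s`, then `t`),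
`φ_{ts}` is `pds (pdt φ)`, etc. -/

def sig1 (φ : ℝ → ℝ → ℝ → ℝ → ℝ) (u s v t : ℝ) : ℝ :=
  φ u s v t - s * pds φ u s v t - t * pdt φ u s v t

def sig2 (φ : ℝ → ℝ → ℝ → ℝ → ℝ) (u s v t : ℝ) : ℝ :=
  sig1 φ u s v t * pds φ u s v t - s * φ u s v t * pds (pds φ) u s v t -
    t * φ u s v t * pds (pdt φ) u s v t

def sig3 (φ : ℝ → ℝ → ℝ → ℝ → ℝ) (u s v t : ℝ) : ℝ :=
  sig1 φ u s v t * pdt φ u s v t - s * φ u s v t * pdt (pds φ) u s v t -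
    t * φ u s v t * pdt (pdt φ) u s v t

def sig4 (φ : ℝ → ℝ → ℝ → ℝ → ℝ) (u s v t : ℝ) : ℝ :=
  3 * pds φ u s v t * pds (pds φ) u s v t + φ u s v t * pds (pds (pds φ)) u s v t

def sig5 (φ : ℝ → ℝ → ℝ → ℝ → ℝ) (u s v t : ℝ) : ℝ :=
  3 * pdt φ u s v t * pdt (pdt φ) u s v t + φ u s v t * pdt (pdt (pdt φ)) u s v t

def sig6 (φ : ℝ → ℝ → ℝ → ℝ → ℝ) (u s v t : ℝ) : ℝ :=
  2 * pds φ u s v t * pdt (pds φ) u s v t + pdt φ u s v t * pds (pds φ) u s v t +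
    φ u s v t * pdt (pds (pds φ)) u s v t

def sig7 (φ : ℝ → ℝ → ℝ → ℝ → ℝ) (u s v t : ℝ) : ℝ :=
  2 * pdt φ u s v t * pds (pdt φ) u s v t + pds φ u s v t * pdt (pdt φ) u s v t +
    φ u s v t * pds (pdt (pdt φ)) u s v t

def sig8 (φ : ℝ → ℝ → ℝ → ℝ → ℝ) (u s v t : ℝ) : ℝ :=
  φ u s v t * (sig1 φ u s v t * sig4 φ u s v t - 3 * sig2 φ u s v t * pds (pds φ) u s v t)

def sig9 (φ : ℝ → ℝ → ℝ → ℝ → ℝ) (u s v t : ℝ) : ℝ :=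
  φ u s v t * (sig1 φ u s v t * sig5 φ u s v t - 3 * sig3 φ u s v t * pdt (pdt φ) u s v t)

def sig10 (φ : ℝ → ℝ → ℝ → ℝ → ℝ) (u s v t : ℝ) : ℝ :=
  φ u s v t * (sig1 φ u s v t * sig6 φ u s v t - 2 * sig2 φ u s v t * pdt (pds φ) u s v t -
    sig3 φ u s v t * pds (pds φ) u s v t)

def sig11 (φ : ℝ → ℝ → ℝ → ℝ → ℝ) (u s v t : ℝ) : ℝ :=
  φ u s v t * (sig1 φ u s v t * sig7 φ u s v t - 2 * sig3 φ u s v t * pds (pdt φ) u s v t -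
    sig2 φ u s v t * pdt (pdt φ) u s v t)

/-- The scalar `H` of Lemma 3.2. -/
def Hc {n : ℕ} (φ : ℝ → ℝ → ℝ → ℝ → ℝ) (a x y : Fin n → ℝ) : ℝ :=
  ((n : ℝ) + 1) * (ev (pds φ) a x y / ev φ a x y +
      ev (pds (sig1 φ)) a x y / ev (sig1 φ) a x y) +
  nS2 φ a x y * (ev (pds (pds (pds φ))) a x y -
      3 * ev (pds (sig1 φ)) a x y * ev (pds (pds φ)) a x y / ev (sig1 φ) a x y) * ev φ a x y +
  2 * nR2 φ a x y * (ev (pdt (pds (pds φ))) a x y -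
      (2 * ev (pds (sig1 φ)) a x y * ev (pdt (pds φ)) a x y +
        ev (pdt (sig1 φ)) a x y * ev (pds (pds φ)) a x y) / ev (sig1 φ) a x y) * ev φ a x y +
  nT2 φ a x y * (ev (pds (pdt (pdt φ))) a x y -
      (2 * ev (pdt (sig1 φ)) a x y * ev (pds (pdt φ)) a x y +
        ev (pds (sig1 φ)) a x y * ev (pdt (pdt φ)) a x y) / ev (sig1 φ) a x y) * ev φ a x y

/-- The scalar `K` of Lemma 3.2. -/
def Kc {n : ℕ} (φ : ℝ → ℝ → ℝ → ℝ → ℝ) (a x y : Fin n → ℝ) : ℝ :=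
  ((n : ℝ) + 1) * (ev (pdt φ) a x y / ev φ a x y +
      ev (pdt (sig1 φ)) a x y / ev (sig1 φ) a x y) +
  nT2 φ a x y * (ev (pdt (pdt (pdt φ))) a x y -
      3 * ev (pdt (sig1 φ)) a x y * ev (pdt (pdt φ)) a x y / ev (sig1 φ) a x y) * ev φ a x y +
  nS2 φ a x y * (ev (pdt (pds (pds φ))) a x y -
      (2 * ev (pds (sig1 φ)) a x y * ev (pdt (pds φ)) a x y +
        ev (pdt (sig1 φ)) a x y * ev (pds (pds φ)) a x y) / ev (sig1 φ) a x y) * ev φ a x y +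
  2 * nR2 φ a x y * (ev (pds (pdt (pdt φ))) a x y -
      (2 * ev (pdt (sig1 φ)) a x y * ev (pds (pdt φ)) a x y +
        ev (pds (sig1 φ)) a x y * ev (pdt (pdt φ)) a x y) / ev (sig1 φ) a x y) * ev φ a x y

/-- The scalar `M` appearing in the proof of Theorem 1.1. -/
def Mc {n : ℕ} (φ : ℝ → ℝ → ℝ → ℝ → ℝ) (a x y : Fin n → ℝ) : ℝ :=
  ev (sig2 φ) a x y * (ev (sig1 φ) a x y * ((n : ℝ) - 2) * ev φ a x y +
      (ip a a - tc a y ^ 2) * ev φ a x y * ev (pdt (pdt φ)) a x y +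
      (vc a x - sc x y * tc a y) * ev φ a x y * ev (pdt (pds φ)) a x y) -
  ev (sig3 φ) a x y * ((vc a x - sc x y * tc a y) * ev φ a x y * ev (pds (pds φ)) a x y +
      (ip a a - tc a y ^ 2) * ev φ a x y * ev (pdt (pds φ)) a x y) +
  ev (sig10 φ) a x y * (vc a x - sc x y * tc a y) -
  ev (sig11 φ) a x y * (ip a a - tc a y ^ 2)

/-- The scalar `N` appearing in the proof of Theorem 1.1. -/
def Nc {n : ℕ} (φ : ℝ → ℝ → ℝ → ℝ → ℝ) (a x y : Fin n → ℝ) : ℝ :=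
  ev (sig2 φ) a x y * ((vc a x - sc x y * tc a y) * ev φ a x y * ev (pdt (pdt φ)) a x y +
      (uu x - sc x y ^ 2) * ev φ a x y * ev (pdt (pds φ)) a x y) -
  ev (sig3 φ) a x y * (ev (sig1 φ) a x y * ((n : ℝ) - 2) * ev φ a x y +
      (uu x - sc x y ^ 2) * ev φ a x y * ev (pds (pds φ)) a x y +
      (vc a x - sc x y * tc a y) * ev φ a x y * ev (pdt (pds φ)) a x y) +
  ev (sig10 φ) a x y * (uu x - sc x y ^ 2) -
  ev (sig11 φ) a x y * (vc a x - sc x y * tc a y)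

end GSSFinsler
namespace GSSFinsler

/-! ### Calculus in the four scalar variables -/

/-- Joint smoothness of a curried function of four real variables. -/
def Sm (f : ℝ → ℝ → ℝ → ℝ → ℝ) : Prop :=
  ContDiff ℝ (⊤ : ℕ∞) (fun p : ℝ × ℝ × ℝ × ℝ => f p.1 p.2.1 p.2.2.1 p.2.2.2)

/-- The uncurried form of a function of four real variables. -/
def unc (f : ℝ → ℝ → ℝ → ℝ → ℝ) (p : ℝ × ℝ × ℝ × ℝ) : ℝ := f p.1 p.2.1 p.2.2.1 p.2.2.2

lemma Sm.contDiff {f : ℝ → ℝ → ℝ → ℝ → ℝ} (hf : Sm f) : ContDiff ℝ (⊤ : ℕ∞) (unc f) := hf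

lemma Sm.diff {f : ℝ → ℝ → ℝ → ℝ → ℝ} (hf : Sm f) (p : ℝ × ℝ × ℝ × ℝ) :
    HasFDerivAt (unc f) (fderiv ℝ (unc f) p) p :=
  (hf.contDiff.differentiable (by simp) p).hasFDerivAt

lemma Sm.pds_eq {f : ℝ → ℝ → ℝ → ℝ → ℝ} (hf : Sm f) (u s v t : ℝ) :
    pds f u s v t = fderiv ℝ (unc f) (u, s, v, t) (0, 1, 0, 0) := by
  have hc : HasDerivAt (fun z : ℝ => ((u, z, v, t) : ℝ × ℝ × ℝ × ℝ)) (0, 1, 0, 0) s :=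
    (hasDerivAt_const s u).prodMk ((hasDerivAt_id s).prodMk
      ((hasDerivAt_const s v).prodMk (hasDerivAt_const s t)))
  exact ((hf.diff (u, s, v, t)).comp_hasDerivAt s hc).deriv

lemma Sm.pdt_eq {f : ℝ → ℝ → ℝ → ℝ → ℝ} (hf : Sm f) (u s v t : ℝ) :
    pdt f u s v t = fderiv ℝ (unc f) (u, s, v, t) (0, 0, 0, 1) := by
  have hc : HasDerivAt (fun z : ℝ => ((u, s, v, z) : ℝ × ℝ × ℝ × ℝ)) (0, 0, 0, 1) t :=
    (hasDerivAt_const t u).prodMk ((hasDerivAt_const t s).prodMk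
      ((hasDerivAt_const t v).prodMk (hasDerivAt_id t)))
  exact ((hf.diff (u, s, v, t)).comp_hasDerivAt t hc).deriv

lemma Sm.contDiff_fderiv {f : ℝ → ℝ → ℝ → ℝ → ℝ} (hf : Sm f) :
    ContDiff ℝ (⊤ : ℕ∞) (fderiv ℝ (unc f)) :=
  hf.contDiff.fderiv_right (by simp)

lemma Sm.unc_pds {f : ℝ → ℝ → ℝ → ℝ → ℝ} (hf : Sm f) :
    unc (pds f) = fun p => fderiv ℝ (unc f) p (0, 1, 0, 0) := by
  funext p; exact hf.pds_eq _ _ _ _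

lemma Sm.unc_pdt {f : ℝ → ℝ → ℝ → ℝ → ℝ} (hf : Sm f) :
    unc (pdt f) = fun p => fderiv ℝ (unc f) p (0, 0, 0, 1) := by
  funext p; exact hf.pdt_eq _ _ _ _

lemma Sm.pds {f : ℝ → ℝ → ℝ → ℝ → ℝ} (hf : Sm f) : Sm (pds f) := by
  change ContDiff ℝ (⊤ : ℕ∞) (unc (GSSFinsler.pds f))
  rw [hf.unc_pds]
  exact hf.contDiff_fderiv.clm_apply contDiff_const

lemma Sm.pdt {f : ℝ → ℝ → ℝ → ℝ → ℝ} (hf : Sm f) : Sm (pdt f) := by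
  change ContDiff ℝ (⊤ : ℕ∞) (unc (GSSFinsler.pdt f))
  rw [hf.unc_pdt]
  exact hf.contDiff_fderiv.clm_apply contDiff_const

/-- Schwarz's theorem for the variables `s` and `t`. -/
lemma Sm.comm {f : ℝ → ℝ → ℝ → ℝ → ℝ} (hf : Sm f) :
    GSSFinsler.pds (GSSFinsler.pdt f) = GSSFinsler.pdt (GSSFinsler.pds f) := by
  funext u s v t
  have h2 : HasFDerivAt (fderiv ℝ (unc f)) (fderiv ℝ (fderiv ℝ (unc f)) (u, s, v, t))
      (u, s, v, t) := (hf.contDiff_fderiv.differentiable (by simp) _).hasFDerivAt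
  have hsymm : IsSymmSndFDerivAt ℝ (unc f) (u, s, v, t) :=
    hf.contDiff.contDiffAt.isSymmSndFDerivAt (by simp; exact WithTop.coe_le_coe.mpr (le_top : (2 : ℕ∞) ≤ ⊤))
  rw [hf.pdt.pds_eq, hf.pds.pdt_eq, hf.unc_pds, hf.unc_pdt]
  rw [(h2.clm_apply (hasFDerivAt_const _ _)).fderiv, (h2.clm_apply (hasFDerivAt_const _ _)).fderiv]
  simpa using hsymm.eq _ _

/-- `∂σ₁/∂s = −sφ_ss − tφ_ts`. -/
lemma Sm.pds_sig1 {f : ℝ → ℝ → ℝ → ℝ → ℝ} (hf : Sm f) (u s v t : ℝ) :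
    GSSFinsler.pds (sig1 f) u s v t =
      -s * GSSFinsler.pds (GSSFinsler.pds f) u s v t
        - t * GSSFinsler.pdt (GSSFinsler.pds f) u s v t := by
  have key : ∀ {g : ℝ → ℝ → ℝ → ℝ → ℝ}, Sm g →
      HasDerivAt (fun z => g u z v t) (GSSFinsler.pds g u s v t) s := by
    intro g hg
    have hc : HasDerivAt (fun z : ℝ => ((u, z, v, t) : ℝ × ℝ × ℝ × ℝ)) (0, 1, 0, 0) s :=
      (hasDerivAt_const s u).prodMk ((hasDerivAt_id s).prodMk
        ((hasDerivAt_const s v).prodMk (hasDerivAt_const s t)))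
    rw [hg.pds_eq]
    exact (hg.diff (u, s, v, t)).comp_hasDerivAt s hc
  have h := ((key hf).sub ((hasDerivAt_id s).mul (key hf.pds))).sub
    ((hasDerivAt_const s t).mul (key hf.pdt))
  have h' := h.deriv
  rw [hf.comm] at h'
  refine Eq.trans h' ?_
  simp only [id]
  ring

/-- `∂σ₁/∂t = −sφ_st − tφ_tt`. -/
lemma Sm.pdt_sig1 {f : ℝ → ℝ → ℝ → ℝ → ℝ} (hf : Sm f) (u s v t : ℝ) :
    GSSFinsler.pdt (sig1 f) u s v t =
      -s * GSSFinsler.pdt (GSSFinsler.pds f) u s v t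
        - t * GSSFinsler.pdt (GSSFinsler.pdt f) u s v t := by
  have key : ∀ {g : ℝ → ℝ → ℝ → ℝ → ℝ}, Sm g →
      HasDerivAt (fun z => g u s v z) (GSSFinsler.pdt g u s v t) t := by
    intro g hg
    have hc : HasDerivAt (fun z : ℝ => ((u, s, v, z) : ℝ × ℝ × ℝ × ℝ)) (0, 0, 0, 1) t :=
      (hasDerivAt_const t u).prodMk ((hasDerivAt_const t s).prodMk
        ((hasDerivAt_const t v).prodMk (hasDerivAt_id t)))
    rw [hg.pdt_eq]
    exact (hg.diff (u, s, v, t)).comp_hasDerivAt t hc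
  have h := ((key hf).sub ((hasDerivAt_const t s).mul (key hf.pds))).sub
    ((hasDerivAt_id t).mul (key hf.pdt))
  refine Eq.trans h.deriv ?_
  simp only [id]
  ring

/-! ### Gradients in the direction variable `y` -/

/-- The linear functional `w ↦ ∑ cᵢ wᵢ`. -/
def dotL {n : ℕ} (c : Fin n → ℝ) : (Fin n → ℝ) →L[ℝ] ℝ :=
  ∑ i, c i • ContinuousLinearMap.proj i

lemma dotL_apply {n : ℕ} (c w : Fin n → ℝ) : dotL c w = ∑ i, c i * w i := by
  simp [dotL]

lemma dotL_bvec {n : ℕ} (c : Fin n → ℝ) (k : Fin n) : dotL c (bvec n k) = c k := by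
  simp [dotL_apply, bvec, Pi.single_apply]

/-- `f` is differentiable at `z` with vector of partial derivatives `c`. -/
def HasGrad {n : ℕ} (f : (Fin n → ℝ) → ℝ) (c : Fin n → ℝ) (z : Fin n → ℝ) : Prop :=
  HasFDerivAt f (dotL c) z

section HasGrad
variable {n : ℕ} {f g : (Fin n → ℝ) → ℝ} {c d : Fin n → ℝ} {z : Fin n → ℝ}

lemma HasGrad.of {L : (Fin n → ℝ) →L[ℝ] ℝ} (h : HasFDerivAt f L z)
    (hL : ∀ w, L w = ∑ i, c i * w i) : HasGrad f c z := by
  have : dotL c = L := by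
    refine ContinuousLinearMap.ext fun w => ?_
    rw [dotL_apply, hL]
  unfold HasGrad
  rwa [this]

lemma HasGrad.fderiv (h : HasGrad f c z) (k : Fin n) : fderiv ℝ f z (bvec n k) = c k := by
  rw [HasFDerivAt.fderiv h, dotL_bvec]

lemma HasGrad.congr (h : HasGrad f c z) (hcd : ∀ k, c k = d k) : HasGrad f d z := by
  have : c = d := funext hcd
  rwa [← this]

lemma HasGrad.add (hf : HasGrad f c z) (hg : HasGrad g d z) :
    HasGrad (fun w => f w + g w) (fun k => c k + d k) z := by
  refine HasGrad.of (HasFDerivAt.add hf hg) fun w => ?_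
  simp [dotL_apply, add_mul, Finset.sum_add_distrib]

lemma HasGrad.mul (hf : HasGrad f c z) (hg : HasGrad g d z) :
    HasGrad (fun w => f w * g w) (fun k => f z * d k + g z * c k) z := by
  refine HasGrad.of (HasFDerivAt.mul hf hg) fun w => ?_
  simp [dotL_apply, add_mul, Finset.sum_add_distrib, Finset.mul_sum, mul_assoc]

lemma HasGrad.const (b : ℝ) : HasGrad (fun _ : Fin n → ℝ => b) (fun _ => 0) z := by
  refine HasGrad.of (hasFDerivAt_const b z) fun w => ?_
  simp

lemma HasGrad.sub (hf : HasGrad f c z) (hg : HasGrad g d z) :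
    HasGrad (fun w => f w - g w) (fun k => c k - d k) z := by
  refine HasGrad.of (HasFDerivAt.sub hf hg) fun w => ?_
  simp [dotL_apply, sub_mul, Finset.sum_sub_distrib]

/-- Chain rule for an outer function of one variable. -/
lemma HasGrad.comp {h : ℝ → ℝ} {h' : ℝ} (hh : HasDerivAt h h' (f z)) (hf : HasGrad f c z) :
    HasGrad (fun w => h (f w)) (fun k => h' * c k) z := by
  refine HasGrad.of (hh.comp_hasFDerivAt z hf) fun w => ?_
  simp [dotL_apply, Finset.mul_sum, mul_assoc]

lemma HasGrad.coord (i : Fin n) :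
    HasGrad (fun w : Fin n → ℝ => w i) (fun k => if i = k then 1 else 0) z := by
  refine HasGrad.of (hasFDerivAt_apply i z) fun w => ?_
  simp

lemma HasGrad.ip_left (x : Fin n → ℝ) : HasGrad (fun w => ip x w) x z := by
  have : (fun w => ip x w) = dotL x := by funext w; rw [dotL_apply]; rfl
  unfold HasGrad
  rw [this]
  exact (dotL x).hasFDerivAt

lemma HasGrad.congr_of_eventuallyEq (hf : HasGrad f c z) (h : g =ᶠ[nhds z] f) :
    HasGrad g c z := HasFDerivAt.congr_of_eventuallyEq hf h

lemma ip_self_pos (hz : z ≠ 0) : 0 < ip z z := by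
  obtain ⟨i, hi⟩ := Function.ne_iff.mp hz
  exact Finset.sum_pos' (fun j _ => mul_self_nonneg _) ⟨i, Finset.mem_univ _, mul_self_pos.mpr hi⟩

lemma nrm_pos (hz : z ≠ 0) : 0 < nrm z := Real.sqrt_pos.mpr (ip_self_pos hz)

lemma nrm_sq : nrm z * nrm z = ip z z :=
  Real.mul_self_sqrt (Finset.sum_nonneg fun _ _ => mul_self_nonneg _)

lemma HasGrad.nrm (hz : z ≠ 0) : HasGrad nrm (fun k => z k / nrm z) z := by
  have h1 : HasGrad (fun w : Fin n → ℝ => ip w w) (fun k => 2 * z k) z := by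
    have h0 := HasFDerivAt.fun_sum (u := Finset.univ) (fun i _ =>
      HasFDerivAt.mul (hasFDerivAt_apply (𝕜 := ℝ) i z) (hasFDerivAt_apply (𝕜 := ℝ) i z))
    refine HasGrad.of (f := fun w => ip w w) h0 fun w => ?_
    simp only [sum_apply, add_apply, smul_apply, ContinuousLinearMap.proj_apply, smul_eq_mul]
    refine Finset.sum_congr rfl fun i _ => by ring
  have h2 := (HasGrad.comp (f := fun w => ip w w) (h := Real.sqrt) (Real.hasDerivAt_sqrt (ip_self_pos hz).ne') h1)
  refine h2.congr fun k => ?_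
  have := (nrm_pos hz).ne'
  change 1 / (2 * GSSFinsler.nrm z) * _ = _
  field_simp

lemma HasGrad.inv_nrm (hz : z ≠ 0) :
    HasGrad (fun w => (GSSFinsler.nrm w)⁻¹) (fun k => -(z k / GSSFinsler.nrm z) / GSSFinsler.nrm z ^ 2) z := by
  refine (HasGrad.comp (hasDerivAt_inv (nrm_pos hz).ne') (HasGrad.nrm hz)).congr fun k => ?_
  ring

/-- The Euclidean projection `δ_{ij} − r_i r_j` onto the hyperplane orthogonal to `y`. -/
def Pr (z : Fin n → ℝ) (i j : Fin n) : ℝ := (if i = j then 1 else 0) - z i / nrm z * (z j / nrm z)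

lemma HasGrad.dir (hz : z ≠ 0) (i : Fin n) :
    HasGrad (fun w => w i / GSSFinsler.nrm w) (fun k => Pr z i k / GSSFinsler.nrm z) z := by
  have h := (HasGrad.coord i).mul (HasGrad.inv_nrm hz)
  refine HasGrad.congr (f := fun w => w i / GSSFinsler.nrm w) h fun k => ?_
  have := (nrm_pos hz).ne'
  simp only [Pr]
  field_simp
  ring

lemma HasGrad.sc (x : Fin n → ℝ) (hz : z ≠ 0) :
    HasGrad (fun w => GSSFinsler.sc x w) (fun k => sv x z k / GSSFinsler.nrm z) z := by
  have h := (HasGrad.ip_left x).mul (HasGrad.inv_nrm hz)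
  refine HasGrad.congr (f := fun w => GSSFinsler.sc x w) h fun k => ?_
  have := (nrm_pos hz).ne'
  simp only [sv, GSSFinsler.sc]
  field_simp
  ring

lemma HasGrad.sv (x : Fin n → ℝ) (hz : z ≠ 0) (i : Fin n) :
    HasGrad (fun w => GSSFinsler.sv x w i)
      (fun k => -(GSSFinsler.sv x z k * (z i / GSSFinsler.nrm z)
        + GSSFinsler.sc x z * Pr z i k) / GSSFinsler.nrm z) z := by
  have h := (HasGrad.const (x i)).sub ((HasGrad.sc x hz).mul (HasGrad.dir hz i))
  refine HasGrad.congr (f := fun w => GSSFinsler.sv x w i) h fun k => ?_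
  ring

lemma HasGrad.ev {φ : ℝ → ℝ → ℝ → ℝ → ℝ} (hφ : Sm φ) (a x : Fin n → ℝ) (hz : z ≠ 0) :
    HasGrad (fun w => GSSFinsler.ev φ a x w)
      (fun k => (GSSFinsler.ev (pds φ) a x z * GSSFinsler.sv x z k
        + GSSFinsler.ev (pdt φ) a x z * tv a z k) / GSSFinsler.nrm z) z := by
  have hs : HasFDerivAt (fun w => GSSFinsler.sc x w) _ z := HasGrad.sc x hz
  have ht : HasFDerivAt (fun w => GSSFinsler.sc a w) _ z := HasGrad.sc a hz
  have hc := (hasFDerivAt_const (𝕜 := ℝ) (uu x) z).prodMk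
    (hs.prodMk ((hasFDerivAt_const (𝕜 := ℝ) (vc a x) z).prodMk ht))
  have h := (hφ.diff (uu x, GSSFinsler.sc x z, vc a x, GSSFinsler.sc a z)).comp z hc
  refine HasGrad.of h fun w => ?_
  have hsplit : ∀ p q : ℝ, ((0, p, 0, q) : ℝ × ℝ × ℝ × ℝ)
      = p • ((0, 1, 0, 0) : ℝ × ℝ × ℝ × ℝ) + q • ((0, 0, 0, 1) : ℝ × ℝ × ℝ × ℝ) := by
    intro p q; simp
  simp only [ContinuousLinearMap.comp_apply, ContinuousLinearMap.prod_apply,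
    zero_apply]
  rw [hsplit, map_add, map_smul, map_smul, ← hφ.pds_eq, ← hφ.pdt_eq]
  simp only [dotL_apply, smul_eq_mul, Finset.sum_mul, ← Finset.sum_add_distrib]
  refine Finset.sum_congr rfl fun k _ => ?_
  simp only [GSSFinsler.ev, tv, tc, GSSFinsler.sv, GSSFinsler.sc]
  ring

lemma HasGrad.tc (a : Fin n → ℝ) (hz : z ≠ 0) :
    HasGrad (fun w => GSSFinsler.tc a w) (fun k => tv a z k / GSSFinsler.nrm z) z :=
  HasGrad.sc a hz

lemma HasGrad.tv (a : Fin n → ℝ) (hz : z ≠ 0) (i : Fin n) :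
    HasGrad (fun w => GSSFinsler.tv a w i)
      (fun k => -(GSSFinsler.tv a z k * (z i / GSSFinsler.nrm z)
        + GSSFinsler.tc a z * Pr z i k) / GSSFinsler.nrm z) z :=
  HasGrad.sv a hz i

end HasGrad
end GSSFinsler

namespace GSSFinsler

/-! ### The fundamental tensor and the Cartan tensor -/

section tensors
variable {n : ℕ} {φ : ℝ → ℝ → ℝ → ℝ → ℝ} {a x z : Fin n → ℝ}

/-- The partial derivative `F_{y^i} = φ r_i + φ_s s_i + φ_t t_i`. -/
def Fd (φ : ℝ → ℝ → ℝ → ℝ → ℝ) (a x z : Fin n → ℝ) (i : Fin n) : ℝ :=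
  ev φ a x z * (z i / nrm z) + ev (pds φ) a x z * sv x z i + ev (pdt φ) a x z * tv a z i

/-- The rescaled Hessian
`r F_{y^i y^j} = σ₁(δ_{ij} − r_i r_j) + φ_ss s_i s_j + φ_st(s_i t_j + t_i s_j) + φ_tt t_i t_j`. -/
def Ah (φ : ℝ → ℝ → ℝ → ℝ → ℝ) (a x z : Fin n → ℝ) (i j : Fin n) : ℝ :=
  (ev φ a x z - sc x z * ev (pds φ) a x z - tc a z * ev (pdt φ) a x z) * Pr z i j
    + ev (pds (pds φ)) a x z * (sv x z i * sv x z j)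
    + ev (pdt (pds φ)) a x z * (sv x z i * tv a z j + tv a z i * sv x z j)
    + ev (pdt (pdt φ)) a x z * (tv a z i * tv a z j)

lemma Pr_symm (i j : Fin n) : Pr z i j = Pr z j i := by
  simp only [Pr, eq_comm (a := i) (b := j)]
  ring

lemma Ah_symm (i j : Fin n) : Ah φ a x z i j = Ah φ a x z j i := by
  simp only [Ah, Pr_symm i j]
  ring

lemma HasGrad.Fm (hφ : Sm φ) (hz : z ≠ 0) :
    HasGrad (fun w => GSSFinsler.Fm φ a x w) (Fd φ a x z) z := by
  have h := (HasGrad.nrm hz).mul (HasGrad.ev hφ a x hz)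
  refine HasGrad.congr (f := fun w => GSSFinsler.Fm φ a x w) h fun k => ?_
  have := (nrm_pos hz).ne'
  simp only [Fd]
  field_simp
  ring

lemma HasGrad.Fd (hφ : Sm φ) (hz : z ≠ 0) (i : Fin n) :
    HasGrad (fun w => GSSFinsler.Fd φ a x w i) (fun k => Ah φ a x z i k / GSSFinsler.nrm z) z := by
  have h := (((HasGrad.ev hφ a x hz).mul (HasGrad.dir hz i)).add
    ((HasGrad.ev hφ.pds a x hz).mul (HasGrad.sv x hz i))).add
    ((HasGrad.ev hφ.pdt a x hz).mul (HasGrad.tv a hz i))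
  refine HasGrad.congr (f := fun w => GSSFinsler.Fd φ a x w i) h fun k => ?_
  rw [hφ.comm]
  simp only [Ah]
  ring

lemma HasGrad.Fm_sq (hφ : Sm φ) (hz : z ≠ 0) :
    HasGrad (fun w => GSSFinsler.Fm φ a x w ^ 2)
      (fun k => 2 * (GSSFinsler.Fm φ a x z * GSSFinsler.Fd φ a x z k)) z := by
  have h := (HasGrad.Fm (a := a) (x := x) hφ hz).mul (HasGrad.Fm (a := a) (x := x) hφ hz)
  have e : (fun w => GSSFinsler.Fm φ a x w ^ 2)
      = fun w => GSSFinsler.Fm φ a x w * GSSFinsler.Fm φ a x w := by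
    funext w; ring
  rw [e]
  refine h.congr fun k => ?_
  ring

lemma eventually_ne (hz : z ≠ 0) : ∀ᶠ w in nhds z, w ≠ 0 := isOpen_ne.mem_nhds hz

/-- `g_{ij} = F_{y^i}F_{y^j} + F F_{y^i y^j}`. -/
lemma gm_eq (hφ : Sm φ) (hz : z ≠ 0) (i j : Fin n) :
    gm φ a x z i j = Fd φ a x z i * Fd φ a x z j + ev φ a x z * Ah φ a x z i j := by
  have h := (HasGrad.const 2).mul
    ((HasGrad.Fm (a := a) (x := x) hφ hz).mul (HasGrad.Fd (a := a) (x := x) hφ hz j))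
  have e : (fun w => fderiv ℝ (fun w => (Fm φ a x w) ^ 2) w (bvec n j))
      =ᶠ[nhds z] fun w => 2 * (Fm φ a x w * Fd φ a x w j) := by
    filter_upwards [eventually_ne hz] with w hw
    exact (HasGrad.Fm_sq hφ hw).fderiv j
  have := (nrm_pos hz).ne'
  rw [gm, (h.congr_of_eventuallyEq e).fderiv i, Ah_symm i j]
  change 1 / 2 * (2 * (nrm z * ev φ a x z * _ + _) + _) = _
  field_simp
  ring

lemma HasGrad.Ah (hφ : Sm φ) (hz : z ≠ 0) (i j : Fin n) :
    HasGrad (fun w => GSSFinsler.Ah φ a x w i j) (fun k =>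
      (-(GSSFinsler.ev φ a x z - GSSFinsler.sc x z * GSSFinsler.ev (pds φ) a x z
          - GSSFinsler.tc a z * GSSFinsler.ev (pdt φ) a x z)
          * (Pr z i k * (z j / GSSFinsler.nrm z) + z i / GSSFinsler.nrm z * Pr z j k)
        + (GSSFinsler.ev (pds (sig1 φ)) a x z * GSSFinsler.sv x z k
          + GSSFinsler.ev (pdt (sig1 φ)) a x z * GSSFinsler.tv a z k) * Pr z i j
        + (GSSFinsler.ev (pds (pds (pds φ))) a x z * GSSFinsler.sv x z k
            + GSSFinsler.ev (pdt (pds (pds φ))) a x z * GSSFinsler.tv a z k)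
          * (GSSFinsler.sv x z i * GSSFinsler.sv x z j)
        + (GSSFinsler.ev (pdt (pds (pds φ))) a x z * GSSFinsler.sv x z k
            + GSSFinsler.ev (pds (pdt (pdt φ))) a x z * GSSFinsler.tv a z k)
          * (GSSFinsler.sv x z i * GSSFinsler.tv a z j + GSSFinsler.tv a z i * GSSFinsler.sv x z j)
        + (GSSFinsler.ev (pds (pdt (pdt φ))) a x z * GSSFinsler.sv x z k
            + GSSFinsler.ev (pdt (pdt (pdt φ))) a x z * GSSFinsler.tv a z k)
          * (GSSFinsler.tv a z i * GSSFinsler.tv a z j)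
        - (GSSFinsler.sv x z k * (z i / GSSFinsler.nrm z) + GSSFinsler.sc x z * Pr z i k)
          * (GSSFinsler.ev (pds (pds φ)) a x z * GSSFinsler.sv x z j
            + GSSFinsler.ev (pdt (pds φ)) a x z * GSSFinsler.tv a z j)
        - (GSSFinsler.sv x z k * (z j / GSSFinsler.nrm z) + GSSFinsler.sc x z * Pr z j k)
          * (GSSFinsler.ev (pds (pds φ)) a x z * GSSFinsler.sv x z i
            + GSSFinsler.ev (pdt (pds φ)) a x z * GSSFinsler.tv a z i)
        - (GSSFinsler.tv a z k * (z i / GSSFinsler.nrm z) + GSSFinsler.tc a z * Pr z i k)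
          * (GSSFinsler.ev (pdt (pds φ)) a x z * GSSFinsler.sv x z j
            + GSSFinsler.ev (pdt (pdt φ)) a x z * GSSFinsler.tv a z j)
        - (GSSFinsler.tv a z k * (z j / GSSFinsler.nrm z) + GSSFinsler.tc a z * Pr z j k)
          * (GSSFinsler.ev (pdt (pds φ)) a x z * GSSFinsler.sv x z i
            + GSSFinsler.ev (pdt (pdt φ)) a x z * GSSFinsler.tv a z i))
      / GSSFinsler.nrm z) z := by
  have hs := HasGrad.sv x hz
  have ht := HasGrad.tv a hz
  have hP := (HasGrad.const (if i = j then 1 else 0)).sub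
    ((HasGrad.dir hz i).mul (HasGrad.dir hz j))
  have h := (((((((HasGrad.ev hφ a x hz).sub
      ((HasGrad.sc x hz).mul (HasGrad.ev hφ.pds a x hz))).sub
      ((HasGrad.tc a hz).mul (HasGrad.ev hφ.pdt a x hz))).mul hP).add
    ((HasGrad.ev hφ.pds.pds a x hz).mul ((hs i).mul (hs j)))).add
    ((HasGrad.ev hφ.pds.pdt a x hz).mul (((hs i).mul (ht j)).add ((ht i).mul (hs j))))).add
    ((HasGrad.ev hφ.pdt.pdt a x hz).mul ((ht i).mul (ht j))))
  refine HasGrad.congr (f := fun w => GSSFinsler.Ah φ a x w i j) h fun k => ?_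
  have e1 : GSSFinsler.ev (GSSFinsler.pds (sig1 φ)) a x z
      = -GSSFinsler.sc x z * GSSFinsler.ev (pds (pds φ)) a x z
        - GSSFinsler.tc a z * GSSFinsler.ev (pdt (pds φ)) a x z := hφ.pds_sig1 _ _ _ _
  have e2 : GSSFinsler.ev (GSSFinsler.pdt (sig1 φ)) a x z
      = -GSSFinsler.sc x z * GSSFinsler.ev (pdt (pds φ)) a x z
        - GSSFinsler.tc a z * GSSFinsler.ev (pdt (pdt φ)) a x z := hφ.pdt_sig1 _ _ _ _
  rw [e1, e2, hφ.pdt.comm, hφ.pds.comm, hφ.comm]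
  have eP : (if i = j then (1 : ℝ) else 0) - z i / GSSFinsler.nrm z * (z j / GSSFinsler.nrm z)
      = Pr z i j := rfl
  rw [eP]
  ring

/-- The covector `ζ = (φ_s/φ + σ_{1s}/σ₁) s + (φ_t/φ + σ_{1t}/σ₁) t`. -/
def zv (φ : ℝ → ℝ → ℝ → ℝ → ℝ) (a x z : Fin n → ℝ) (i : Fin n) : ℝ :=
  (ev (pds φ) a x z / ev φ a x z + ev (pds (sig1 φ)) a x z / ev (sig1 φ) a x z) * sv x z i
    + (ev (pdt φ) a x z / ev φ a x z + ev (pdt (sig1 φ)) a x z / ev (sig1 φ) a x z) * tv a z i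

/-- Coefficient of `s_i s_j s_k` in `2r C_{ijk}`. -/
def c1 (φ : ℝ → ℝ → ℝ → ℝ → ℝ) (a x y : Fin n → ℝ) : ℝ :=
  (ev (pds (pds (pds φ))) a x y -
      3 * ev (pds (sig1 φ)) a x y * ev (pds (pds φ)) a x y / ev (sig1 φ) a x y) * ev φ a x y

/-- Coefficient of the symmetrization of `s_i s_j t_k` in `2r C_{ijk}`. -/
def c2 (φ : ℝ → ℝ → ℝ → ℝ → ℝ) (a x y : Fin n → ℝ) : ℝ :=
  (ev (pdt (pds (pds φ))) a x y -
      (2 * ev (pds (sig1 φ)) a x y * ev (pdt (pds φ)) a x y +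
        ev (pdt (sig1 φ)) a x y * ev (pds (pds φ)) a x y) / ev (sig1 φ) a x y) * ev φ a x y

/-- Coefficient of the symmetrization of `s_i t_j t_k` in `2r C_{ijk}`. -/
def c3 (φ : ℝ → ℝ → ℝ → ℝ → ℝ) (a x y : Fin n → ℝ) : ℝ :=
  (ev (pds (pdt (pdt φ))) a x y -
      (2 * ev (pdt (sig1 φ)) a x y * ev (pds (pdt φ)) a x y +
        ev (pds (sig1 φ)) a x y * ev (pdt (pdt φ)) a x y) / ev (sig1 φ) a x y) * ev φ a x y

/-- Coefficient of `t_i t_j t_k` in `2r C_{ijk}`. -/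
def c4 (φ : ℝ → ℝ → ℝ → ℝ → ℝ) (a x y : Fin n → ℝ) : ℝ :=
  (ev (pdt (pdt (pdt φ))) a x y -
      3 * ev (pdt (sig1 φ)) a x y * ev (pdt (pdt φ)) a x y / ev (sig1 φ) a x y) * ev φ a x y

/-- The Cartan tensor is the symmetrization of `ζ ⊗ h`, with `h = φ · Ah` the angular metric,
plus a cubic form in the two covectors `s` and `t`. -/
lemma cart_eq (hφ : Sm φ) (hz : z ≠ 0) (h0 : ev φ a x z ≠ 0) (h1 : ev (sig1 φ) a x z ≠ 0)
    (i j k : Fin n) :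
    cart φ a x z i j k = 1 / (2 * nrm z) *
      (ev φ a x z * (zv φ a x z k * Ah φ a x z i j + zv φ a x z i * Ah φ a x z j k
          + zv φ a x z j * Ah φ a x z i k)
        + c1 φ a x z * (sv x z i * sv x z j * sv x z k)
        + c2 φ a x z * (sv x z i * sv x z j * tv a z k + sv x z i * tv a z j * sv x z k
            + tv a z i * sv x z j * sv x z k)
        + c3 φ a x z * (sv x z i * tv a z j * tv a z k + tv a z i * sv x z j * tv a z k
            + tv a z i * tv a z j * sv x z k)
        + c4 φ a x z * (tv a z i * tv a z j * tv a z k)) := by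
  have h := ((HasGrad.Fd (a := a) (x := x) hφ hz i).mul
      (HasGrad.Fd (a := a) (x := x) hφ hz j)).add
    ((HasGrad.ev hφ a x hz).mul (HasGrad.Ah (a := a) (x := x) hφ hz i j))
  have e : (fun w => gm φ a x w i j) =ᶠ[nhds z]
      fun w => Fd φ a x w i * Fd φ a x w j + ev φ a x w * Ah φ a x w i j := by
    filter_upwards [eventually_ne hz] with w hw
    exact gm_eq hφ hw i j
  have hr := (nrm_pos hz).ne'
  rw [cart, (h.congr_of_eventuallyEq e).fderiv k]
  have es : ev (sig1 φ) a x z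
      = ev φ a x z - sc x z * ev (pds φ) a x z - tc a z * ev (pdt φ) a x z := rfl
  have e1 : ev (pds (sig1 φ)) a x z
      = -sc x z * ev (pds (pds φ)) a x z - tc a z * ev (pdt (pds φ)) a x z := hφ.pds_sig1 _ _ _ _
  have e2 : ev (pdt (sig1 φ)) a x z
      = -sc x z * ev (pdt (pds φ)) a x z - tc a z * ev (pdt (pdt φ)) a x z := hφ.pdt_sig1 _ _ _ _
  -- With `σ_{1s} = -sφ_ss - tφ_st` and `σ_{1t} = -sφ_st - tφ_tt` substituted, the claim is an
  -- identity of rational functions in the remaining quantities.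
  simp only [Fd, Ah, zv, c1, c2, c3, c4, hφ.comm, ← es]
  rw [e1, e2]
  generalize ev (sig1 φ) a x z = σ at *
  generalize ev φ a x z = f at *
  generalize ev (pds (pds (pds φ))) a x z = fsss at *
  generalize ev (pdt (pds (pds φ))) a x z = fsst at *
  generalize ev (pds (pdt (pdt φ))) a x z = fstt at *
  generalize ev (pdt (pdt (pdt φ))) a x z = fttt at *
  generalize ev (pds (pds φ)) a x z = fss at *
  generalize ev (pdt (pds φ)) a x z = fst at *
  generalize ev (pdt (pdt φ)) a x z = ftt at *
  generalize ev (pds φ) a x z = fs at *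
  generalize ev (pdt φ) a x z = ft at *
  generalize nrm z = r at *
  field_simp
  ring

/-! ### Contraction with the inverse fundamental tensor -/

/-- Full contraction `∑ G_{jl} M_{jl}` as a linear functional of `M`. -/
def tr (G : Matrix (Fin n) (Fin n) ℝ) : (Fin n → Fin n → ℝ) →ₗ[ℝ] ℝ where
  toFun M := ∑ j, ∑ l, G j l * M j l
  map_add' M N := by simp [mul_add, Finset.sum_add_distrib]
  map_smul' b M := by simp [Finset.mul_sum, mul_left_comm]

/-- The rank-one tensor `p ⊗ q`. -/
def outer (p q : Fin n → ℝ) : Fin n → Fin n → ℝ := fun j l => p j * q l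

lemma tr_outer (G : Matrix (Fin n) (Fin n) ℝ) (p q : Fin n → ℝ) :
    tr G (outer p q) = ∑ j, ∑ l, G j l * p j * q l := by
  simp [tr, outer, mul_assoc]

lemma tr_outer_comm {G : Matrix (Fin n) (Fin n) ℝ} (hG : G.transpose = G) (p q : Fin n → ℝ) :
    tr G (outer p q) = tr G (outer q p) := by
  rw [tr_outer, tr_outer, Finset.sum_comm]
  refine Finset.sum_congr rfl fun j _ => Finset.sum_congr rfl fun l _ => ?_
  have : G l j = G j l := congrFun (congrFun hG j) l
  rw [this]; ring

lemma tr_outer_apply (G : Matrix (Fin n) (Fin n) ℝ) (p q : Fin n → ℝ) :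
    tr G (outer p q) = ∑ j, p j * ∑ l, G j l * q l := by
  rw [tr_outer]
  refine Finset.sum_congr rfl fun j _ => ?_
  rw [Finset.mul_sum]
  exact Finset.sum_congr rfl fun l _ => by ring

lemma tr_outer_add_left (G : Matrix (Fin n) (Fin n) ℝ) (p p' q : Fin n → ℝ) (b b' : ℝ) :
    tr G (outer (fun i => b * p i + b' * p' i) q)
      = b * tr G (outer p q) + b' * tr G (outer p' q) := by
  have : outer (fun i => b * p i + b' * p' i) q = b • outer p q + b' • outer p' q := by
    funext j l; simp [outer]; ring
  rw [this]; simp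

lemma sum_sv_mul (x : Fin n → ℝ) (hz : z ≠ 0) : ∑ i, sv x z i * z i = 0 := by
  have e : ∑ i, sv x z i * z i = ip x z - sc x z / nrm z * ip z z := by
    simp only [sv, ip, Finset.mul_sum, ← Finset.sum_sub_distrib]
    exact Finset.sum_congr rfl fun i _ => by ring
  have := (nrm_pos hz).ne'
  rw [e, ← nrm_sq, sc]
  field_simp
  ring

lemma sum_tv_mul (a : Fin n → ℝ) (hz : z ≠ 0) : ∑ i, tv a z i * z i = 0 := sum_sv_mul a hz

lemma sum_dir_mul (hz : z ≠ 0) : ∑ i, z i / nrm z * z i = nrm z := by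
  have e : ∑ i, z i / nrm z * z i = ip z z / nrm z := by
    rw [ip, Finset.sum_div]
    exact Finset.sum_congr rfl fun i _ => by ring
  have := (nrm_pos hz).ne'
  rw [e, ← nrm_sq]
  field_simp

lemma sum_Pr_mul (hz : z ≠ 0) (i : Fin n) : ∑ j, Pr z i j * z j = 0 := by
  have e : ∑ j, Pr z i j * z j = z i - z i / nrm z * ∑ j, z j / nrm z * z j := by
    simp only [Pr, sub_mul, Finset.sum_sub_distrib, Finset.mul_sum]
    simp [mul_assoc]
  have := (nrm_pos hz).ne'
  rw [e, sum_dir_mul hz]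
  field_simp
  ring

/-- Euler's identity `F_{y^i} y^i = F`. -/
lemma sum_Fd_mul (hz : z ≠ 0) : ∑ i, Fd φ a x z i * z i = nrm z * ev φ a x z := by
  have e : ∑ i, Fd φ a x z i * z i = ev φ a x z * ∑ i, z i / nrm z * z i
      + ev (pds φ) a x z * ∑ i, sv x z i * z i + ev (pdt φ) a x z * ∑ i, tv a z i * z i := by
    simp only [Fd, Finset.mul_sum, ← Finset.sum_add_distrib]
    exact Finset.sum_congr rfl fun i _ => by ring
  rw [e, sum_dir_mul hz, sum_sv_mul x hz, sum_tv_mul a hz]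
  ring

lemma sum_Ah_mul (hz : z ≠ 0) (i : Fin n) : ∑ j, Ah φ a x z i j * z j = 0 := by
  have e : ∑ j, Ah φ a x z i j * z j =
      (ev φ a x z - sc x z * ev (pds φ) a x z - tc a z * ev (pdt φ) a x z) * ∑ j, Pr z i j * z j
      + (ev (pds (pds φ)) a x z * sv x z i + ev (pdt (pds φ)) a x z * tv a z i)
          * ∑ j, sv x z j * z j
      + (ev (pdt (pds φ)) a x z * sv x z i + ev (pdt (pdt φ)) a x z * tv a z i)
          * ∑ j, tv a z j * z j := by
    simp only [Ah, Finset.mul_sum, ← Finset.sum_add_distrib]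
    exact Finset.sum_congr rfl fun i _ => by ring
  rw [e, sum_Pr_mul hz, sum_sv_mul x hz, sum_tv_mul a hz]
  ring

lemma gMat_symm (hφ : Sm φ) (hz : z ≠ 0) : (gMat φ a x z).transpose = gMat φ a x z := by
  ext i j
  simp only [Matrix.transpose_apply, gMat, Matrix.of_apply]
  rw [gm_eq hφ hz, gm_eq hφ hz, Ah_symm i j]
  ring

lemma gInv_symm (hφ : Sm φ) (hz : z ≠ 0) : (gInv φ a x z).transpose = gInv φ a x z := by
  rw [gInv, Matrix.transpose_nonsing_inv, gMat_symm hφ hz]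

/-- `g^{ij} F_{y^j} = y^i / F`. -/
lemma gInv_Fd (hφ : Sm φ) (hz : z ≠ 0) (h0 : ev φ a x z ≠ 0)
    (hinv : IsUnit (gMat φ a x z).det) (i : Fin n) :
    ∑ j, gInv φ a x z i j * Fd φ a x z j = z i / (nrm z * ev φ a x z) := by
  have hgy : (gMat φ a x z).mulVec z = (nrm z * ev φ a x z) • Fd φ a x z := by
    funext i
    have e : ∑ j, gm φ a x z i j * z j = Fd φ a x z i * ∑ j, Fd φ a x z j * z j
        + ev φ a x z * ∑ j, Ah φ a x z i j * z j := by
      simp only [gm_eq hφ hz, Finset.mul_sum, ← Finset.sum_add_distrib]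
      exact Finset.sum_congr rfl fun i _ => by ring
    change ∑ j, gm φ a x z i j * z j = nrm z * ev φ a x z * Fd φ a x z i
    rw [e, sum_Fd_mul hz, sum_Ah_mul hz]
    ring
  have h := congrArg (fun w => (gInv φ a x z).mulVec w) hgy
  simp only [Matrix.mulVec_mulVec, Matrix.mulVec_smul] at h
  rw [gInv, Matrix.nonsing_inv_mul _ hinv, Matrix.one_mulVec, ← gInv] at h
  have hi := congrFun h i
  have hr := (nrm_pos hz).ne'
  rw [eq_div_iff (mul_ne_zero hr h0), hi]
  change _ = nrm z * ev φ a x z * ∑ j, gInv φ a x z i j * Fd φ a x z j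
  ring

/-- The mean Cartan torsion is `I_k = (H s_k + K t_k)/(2r)`. -/
lemma mci_eq (hφ : Sm φ) (hz : z ≠ 0) (h0 : ev φ a x z ≠ 0) (h1 : ev (sig1 φ) a x z ≠ 0)
    (hinv : IsUnit (gMat φ a x z).det) (k : Fin n) :
    mci φ a x z k = 1 / (2 * nrm z) * (Hc φ a x z * sv x z k + Kc φ a x z * tv a z k) := by
  set G := gInv φ a x z with hGdef
  set F := Fd φ a x z with hF
  set s := sv x z with hs
  set t := tv a z with ht
  set ζ := zv φ a x z with hζ
  have hG : G.transpose = G := gInv_symm hφ hz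
  have hr := (nrm_pos hz).ne'
  have hpF : ∀ p : Fin n → ℝ,
      tr G (outer p F) = (∑ j, p j * z j) / (nrm z * ev φ a x z) := by
    intro p
    rw [tr_outer_apply, Finset.sum_div]
    refine Finset.sum_congr rfl fun j _ => ?_
    rw [gInv_Fd hφ hz h0 hinv]
    ring
  have hFF : tr G (outer F F) = 1 := by
    rw [hpF, sum_Fd_mul hz, div_self (mul_ne_zero hr h0)]
  have hζF : tr G (outer ζ F) = 0 := by
    have e : ζ = fun i => _ * s i + _ * t i := rfl
    rw [e, tr_outer_add_left, hpF, hpF, sum_sv_mul x hz, sum_tv_mul a hz]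
    simp
  have hζg : tr G (outer ζ (fun l => gm φ a x z l k)) = ζ k := by
    rw [tr_outer_apply]
    have hone : ∀ j, ∑ l, G j l * gm φ a x z l k = (1 : Matrix (Fin n) (Fin n) ℝ) j k := by
      intro j
      rw [← Matrix.nonsing_inv_mul _ hinv]
      rfl
    simp [hone, Matrix.one_apply]
  have hgg : tr G (fun j l => gm φ a x z j l) = n := by
    have hone : ∀ j, ∑ l, G j l * gm φ a x z j l = 1 := by
      intro j
      have : (G * (gMat φ a x z)) j j = 1 := by
        rw [hGdef, gInv, Matrix.nonsing_inv_mul _ hinv, Matrix.one_apply_eq]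
      rw [← this, ← gMat_symm hφ hz]
      rfl
    change ∑ j, ∑ l, G j l * gm φ a x z j l = n
    simp [hone]
  have hsplit : (fun j l => cart φ a x z j l k) = (1 / (2 * nrm z)) •
      (ζ k • ((fun j l => gm φ a x z j l) - outer F F)
        + (outer ζ (fun l => gm φ a x z l k) - F k • outer ζ F)
        + (outer (fun l => gm φ a x z l k) ζ - F k • outer F ζ)
        + (c1 φ a x z * s k + c2 φ a x z * t k) • outer s s
        + (c2 φ a x z * s k + c3 φ a x z * t k) • (outer s t + outer t s)
        + (c3 φ a x z * s k + c4 φ a x z * t k) • outer t t) := by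
    funext j l
    simp only [Pi.smul_apply, Pi.add_apply, Pi.sub_apply, smul_eq_mul, outer]
    rw [cart_eq hφ hz h0 h1, gm_eq hφ hz, gm_eq hφ hz, gm_eq hφ hz]
    ring
  have hmci : mci φ a x z k = tr G (fun j l => cart φ a x z j l k) := rfl
  rw [hmci, hsplit]
  simp only [map_smul, map_add, map_sub, smul_eq_mul]
  rw [tr_outer_comm hG (fun l => gm φ a x z l k) ζ, tr_outer_comm hG F ζ, tr_outer_comm hG t s,
    hζg, hζF, hFF, hgg]
  have eS : tr G (outer s s) = nS2 φ a x z := tr_outer _ _ _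
  have eR : tr G (outer s t) = nR2 φ a x z := tr_outer _ _ _
  have eT : tr G (outer t t) = nT2 φ a x z := tr_outer _ _ _
  rw [eS, eR, eT]
  simp only [Hc, Kc, hζ, zv, c1, c2, c3, c4]
  ring

end tensors
end GSSFinsler

open GSSFinsler in
/-- The squared norm of the mean Cartan torsion of a general
spherically symmetric metric:
`‖I‖² = (1/(4r²))(‖𝔖‖²H² + 2‖ℜ‖²HK + ‖𝔗‖²K²)`. -/
theorem normI2_formula_general_spherically_symmetric
    {n : ℕ} (φ : ℝ → ℝ → ℝ → ℝ → ℝ)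
    (hφ : ContDiff ℝ (⊤ : ℕ∞) (fun p : ℝ × ℝ × ℝ × ℝ => φ p.1 p.2.1 p.2.2.1 p.2.2.2))
    (a x y : Fin n → ℝ) (hy : y ≠ 0)
    (hinv : IsUnit (gMat φ a x y).det)
    (hφpos : 0 < ev φ a x y)
    (hσ1 : ev (sig1 φ) a x y ≠ 0) :
    normI2 φ a x y =
      1 / (4 * nrm y ^ 2) *
        (nS2 φ a x y * Hc φ a x y ^ 2 + 2 * nR2 φ a x y * Hc φ a x y * Kc φ a x y +
          nT2 φ a x y * Kc φ a x y ^ 2) := by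
  have h0 := hφpos.ne'
  have hG := gInv_symm (a := a) (x := x) hφ hy
  have hI : mci φ a x y = fun k =>
      (Hc φ a x y / (2 * nrm y)) * sv x y k + (Kc φ a x y / (2 * nrm y)) * tv a y k := by
    funext k
    rw [mci_eq hφ hy h0 hσ1 hinv]
    ring
  have hr := (nrm_pos hy).ne'
  have eS : tr (gInv φ a x y) (outer (sv x y) (sv x y)) = nS2 φ a x y := tr_outer _ _ _
  have eR : tr (gInv φ a x y) (outer (sv x y) (tv a y)) = nR2 φ a x y := tr_outer _ _ _
  have eT : tr (gInv φ a x y) (outer (tv a y) (tv a y)) = nT2 φ a x y := tr_outer _ _ _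
  have eI : normI2 φ a x y = tr (gInv φ a x y) (outer (mci φ a x y) (mci φ a x y)) :=
    (tr_outer _ _ _).symm
  rw [eI, hI, tr_outer_add_left, tr_outer_comm hG (sv x y), tr_outer_comm hG (tv a y),
    tr_outer_add_left, tr_outer_add_left, tr_outer_comm hG (tv a y) (sv x y), eS, eR, eT]
  field_simp
  ring
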